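/- Let α ∈ (0,1) and λ ∈ ℝ with 1 − λ(1−α) ≠ 0. If y : [0,∞) → ℝ is continuously differentiable, satisfies y(0) = 0, and (1/(1−α)) ∫_0^t y′(τ) · exp((α/(α−1))·(t−τ)) dτ = λ·y(t) for all t ≥ 0, then y(t) = 0 for all t ≥ 0. Consequently, two C¹ solutions of the linear equation (CF Δ^{(α)} x)(t) = λ·x(t) + u(t) with the same initial value x(0) coincide. -/

import Mathlib

open MeasureTheory intervalIntegral Real Set Filter

/-!
The Caputo–Fabrizio derivative `D` of `y` satisfies the relaxation equation `(1 - α) D' = y' - α D`.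
If also `D = A y`, then eliminating `D` leaves the differential equation
`(1 - (1 - α) A) y' = α A y`. When `1 - (1 - α) A` is bounded below, which for a scalar `A = λ`
means `1 - λ (1 - α) ≠ 0`, this gives `‖y'‖ ≤ C ‖y‖`, and Grönwall's inequality forces `y = 0` if
`y` vanishes at the base point.
-/

section ExponentialKernel

variable {E : Type*} [NormedAddCommGroup E] [NormedSpace ℝ E] {g : ℝ → E} {a t : ℝ}

theorem intervalIntegrable_exp_smul (hg : ContinuousOn g (Ici a)) (ht : a ≤ t) (c s : ℝ) :
    IntervalIntegrable (fun τ => exp (c * (s - τ)) • g τ) volume a t := by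
  refine ContinuousOn.intervalIntegrable_of_Icc ht ?_
  exact ContinuousOn.smul (by fun_prop) (hg.mono Icc_subset_Ici_self)

theorem integral_exp_smul_eq_exp_smul_integral (g : ℝ → E) (a b c s t : ℝ) :
    ∫ τ in a..b, exp (c * (s - τ)) • g τ =
      exp (c * (s - t)) • ∫ τ in a..b, exp (c * (t - τ)) • g τ := by
  rw [← intervalIntegral.integral_smul]
  congr 1 with τ
  rw [smul_smul, ← exp_add, ← mul_add, sub_add_sub_cancel]

theorem hasDerivWithinAt_integral_exp_smul [CompleteSpace E] (hg : ContinuousOn g (Ici a))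
    (ht : a ≤ t) (c : ℝ) :
    HasDerivWithinAt (fun s => ∫ τ in a..s, exp (c * (s - τ)) • g τ)
      (c • (∫ τ in a..t, exp (c * (t - τ)) • g τ) + g t) (Ici t) t := by
  have hcont : ContinuousOn (fun τ => exp (c * (t - τ)) • g τ) (Ici a) :=
    ContinuousOn.smul (by fun_prop) hg
  have hsub : Ioi t ⊆ Ici a := Ioi_subset_Ici ht
  have hintegral : HasDerivWithinAt (fun s => ∫ τ in a..s, exp (c * (t - τ)) • g τ)
      (exp (c * (t - t)) • g t) (Ici t) t :=
    integral_hasDerivWithinAt_right (intervalIntegrable_exp_smul hg ht c t)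
      ((hcont.mono hsub).stronglyMeasurableAtFilter_nhdsWithin measurableSet_Ioi t)
      ((hcont t ht).mono hsub)
  have hexp : HasDerivWithinAt (fun s => exp (c * (s - t))) c (Ici t) t := by
    simpa using (((hasDerivAt_id t).sub_const t).const_mul c).exp.hasDerivWithinAt
  have hfactor (s : ℝ) := integral_exp_smul_eq_exp_smul_integral g a s c s t
  refine ((hexp.fun_smul hintegral).congr (fun s _ => hfactor s) (hfactor t)).congr_deriv ?_
  rw [sub_self, mul_zero, exp_zero, one_smul, one_smul, add_comm]

end ExponentialKernel

section CaputoFabrizio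

variable {E : Type*} [NormedAddCommGroup E] [NormedSpace ℝ E] {α a t : ℝ} {y : ℝ → E}

/-- The Caputo–Fabrizio fractional derivative of order `α` based at `a`, with normalization
`M(α) = 1`. The derivative of `y` is taken within `[a, ∞)`, so it is one-sided at the base point and
the values of `y` to the left of `a` play no role. At `α = 1` the value is the junk value `0`. -/
noncomputable def caputoFabrizioDeriv (α a : ℝ) (y : ℝ → E) (t : ℝ) : E :=
  (1 / (1 - α)) • ∫ τ in a..t, exp (α / (α - 1) * (t - τ)) • derivWithin y (Ici a) τ

theorem caputoFabrizioDeriv_eq_mul_integral (α a : ℝ) (y : ℝ → ℝ) (t : ℝ) :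
    caputoFabrizioDeriv α a y t =
      1 / (1 - α) * ∫ τ in a..t, derivWithin y (Ici a) τ * exp (α / (α - 1) * (t - τ)) := by
  simp only [caputoFabrizioDeriv, smul_eq_mul, mul_comm (exp _)]

theorem caputoFabrizioDeriv_sub {x₁ x₂ : ℝ → E} (h₁ : ContDiffOn ℝ 1 x₁ (Ici a))
    (h₂ : ContDiffOn ℝ 1 x₂ (Ici a)) (ht : a ≤ t) :
    caputoFabrizioDeriv α a (x₁ - x₂) t =
      caputoFabrizioDeriv α a x₁ t - caputoFabrizioDeriv α a x₂ t := by
  have hcont₁ := h₁.continuousOn_derivWithin (uniqueDiffOn_Ici a) le_rfl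
  have hcont₂ := h₂.continuousOn_derivWithin (uniqueDiffOn_Ici a) le_rfl
  simp only [caputoFabrizioDeriv]
  rw [← smul_sub, ← integral_sub (intervalIntegrable_exp_smul hcont₁ ht _ t)
    (intervalIntegrable_exp_smul hcont₂ ht _ t)]
  congr 1
  refine integral_congr fun τ hτ => ?_
  have hτa : τ ∈ Ici a := (uIcc_of_le ht ▸ hτ).1
  simp only [derivWithin_sub (h₁.differentiableOn one_ne_zero τ hτa)
    (h₂.differentiableOn one_ne_zero τ hτa), smul_sub]

variable [CompleteSpace E]

theorem hasDerivWithinAt_caputoFabrizioDeriv (hy : ContDiffOn ℝ 1 y (Ici a)) (ht : a ≤ t) :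
    HasDerivWithinAt (caputoFabrizioDeriv α a y)
      ((1 / (1 - α)) • (derivWithin y (Ici a) t - α • caputoFabrizioDeriv α a y t)) (Ici t) t := by
  have hcont := hy.continuousOn_derivWithin (uniqueDiffOn_Ici a) le_rfl
  have hrate : α / (α - 1) = -(α * (1 / (1 - α))) := by
    rw [← neg_sub 1 α, div_neg, mul_one_div]
  have hconv : HasDerivWithinAt (caputoFabrizioDeriv α a y) _ (Ici t) t :=
    (hasDerivWithinAt_integral_exp_smul hcont ht (α / (α - 1))).const_smul (1 / (1 - α))
  refine hconv.congr_deriv ?_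
  rw [caputoFabrizioDeriv, smul_smul α, hrate, neg_smul, neg_add_eq_sub]

variable {A : E →L[ℝ] E}

theorem apply_derivWithin_eq_of_caputoFabrizioDeriv_eq (hα : α ≠ 1) (hy : ContDiffOn ℝ 1 y (Ici a))
    (hD : ∀ s, a ≤ s → caputoFabrizioDeriv α a y s = A (y s)) (ht : a ≤ t) :
    (1 - (1 - α) • A : E →L[ℝ] E) (derivWithin y (Ici a) t) = α • A (y t) := by
  have hyderiv : HasDerivWithinAt y (derivWithin y (Ici a) t) (Ici t) t :=
    (hy.differentiableOn one_ne_zero t ht).hasDerivWithinAt.mono (Ici_subset_Ici.2 ht)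
  have hleft : HasDerivWithinAt (caputoFabrizioDeriv α a y) (A (derivWithin y (Ici a) t))
      (Ici t) t :=
    (A.hasFDerivAt.comp_hasDerivWithinAt t hyderiv).congr
      (fun s hs => hD s (ht.trans hs)) (hD t ht)
  have hrelax : A (derivWithin y (Ici a) t) =
      (1 / (1 - α)) • (derivWithin y (Ici a) t - α • A (y t)) := by
    rw [← hD t ht]
    exact (uniqueDiffWithinAt_Ici t).eq_deriv _ hleft (hasDerivWithinAt_caputoFabrizioDeriv hy ht)
  have hmul : (1 - α) • A (derivWithin y (Ici a) t) = derivWithin y (Ici a) t - α • A (y t) := by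
    rw [hrelax, smul_smul, mul_one_div_cancel (sub_ne_zero.2 hα.symm), one_smul]
  simp [hmul]

theorem eqOn_zero_of_caputoFabrizioDeriv_eq (hα : α ≠ 1) {K : NNReal}
    (hK : AntilipschitzWith K (1 - (1 - α) • A : E →L[ℝ] E))
    (hy : ContDiffOn ℝ 1 y (Ici a)) (ha : y a = 0)
    (hD : ∀ t, a ≤ t → caputoFabrizioDeriv α a y t = A (y t)) : EqOn y 0 (Ici a) := by
  have hbound (s : ℝ) (hs : a ≤ s) :
      ‖derivWithin y (Ici a) s‖ ≤ K * (|α| * ‖A‖) * ‖y s‖ :=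
    calc ‖derivWithin y (Ici a) s‖
        ≤ K * ‖(1 - (1 - α) • A : E →L[ℝ] E) (derivWithin y (Ici a) s)‖ :=
        hK.le_mul_norm (map_zero _) _
      _ = K * (|α| * ‖A (y s)‖) := by
        rw [apply_derivWithin_eq_of_caputoFabrizioDeriv_eq hα hy hD hs, norm_smul, norm_eq_abs]
      _ ≤ K * (|α| * (‖A‖ * ‖y s‖)) := by gcongr; exact A.le_opNorm _
      _ = K * (|α| * ‖A‖) * ‖y s‖ := by ring
  intro t ht
  refine eq_zero_of_abs_deriv_le_mul_abs_self_of_eq_zero_right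
    (hy.continuousOn.mono Icc_subset_Ici_self) (fun s hs => ?_) ha
    (fun s hs => hbound s hs.1) t (right_mem_Icc.2 ht)
  exact (hy.differentiableOn one_ne_zero s hs.1).hasDerivWithinAt.mono (Ici_subset_Ici.2 hs.1)

theorem cf_linear_uniqueness_general (hα : α ≠ 1) {K : NNReal}
    (hK : AntilipschitzWith K (1 - (1 - α) • A : E →L[ℝ] E)) {u x₁ x₂ : ℝ → E}
    (h₁ : ContDiffOn ℝ 1 x₁ (Ici a)) (h₂ : ContDiffOn ℝ 1 x₂ (Ici a)) (ha : x₁ a = x₂ a)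
    (hx₁ : ∀ t, a ≤ t → caputoFabrizioDeriv α a x₁ t = A (x₁ t) + u t)
    (hx₂ : ∀ t, a ≤ t → caputoFabrizioDeriv α a x₂ t = A (x₂ t) + u t) :
    EqOn x₁ x₂ (Ici a) := by
  have hdiff (t : ℝ) (ht : a ≤ t) : caputoFabrizioDeriv α a (x₁ - x₂) t = A ((x₁ - x₂) t) := by
    rw [caputoFabrizioDeriv_sub h₁ h₂ ht, hx₁ t ht, hx₂ t ht, Pi.sub_apply, map_sub,
      add_sub_add_right_eq_sub]
  have hzero := eqOn_zero_of_caputoFabrizioDeriv_eq hα hK (h₁.sub h₂) (sub_eq_zero.2 ha) hdiff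
  exact fun t ht => sub_eq_zero.1 (hzero ht)

end CaputoFabrizio

theorem antilipschitzWith_one_sub_smul_smul_one {E : Type*} [NormedAddCommGroup E] [NormedSpace ℝ E]
    {r lam : ℝ} (h : 1 - lam * r ≠ 0) :
    AntilipschitzWith ‖1 - lam * r‖₊⁻¹ (1 - r • lam • 1 : E →L[ℝ] E) := by
  refine ContinuousLinearMap.antilipschitz_of_bound _ fun v => ?_
  have hv : (1 - r • lam • 1 : E →L[ℝ] E) v = (1 - lam * r) • v := by
    simp [sub_smul, smul_smul, mul_comm]
  rw [hv, norm_smul, NNReal.coe_inv, coe_nnnorm, inv_mul_cancel_left₀ (norm_ne_zero_iff.2 h)]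

/-- Uniqueness for the linear Caputo–Fabrizio equation on `𝕋 = ℝ`: if `y` is `C¹` on
`[0,∞)`, `y 0 = 0` and `(CF Δ^(α) y)(t) = λ y(t)` for all `t ≥ 0`, then `y ≡ 0` on `[0,∞)`.
Consequently, two `C¹` solutions of `(CF Δ^(α) x)(t) = λ x(t) + u(t)` with the same
initial value coincide on `[0,∞)`. -/
theorem cf_linear_uniqueness (α lam : ℝ) (hα : α ∈ Set.Ioo (0 : ℝ) 1)
    (hK : 1 - lam * (1 - α) ≠ 0) :
    (∀ y : ℝ → ℝ, ContDiffOn ℝ 1 y (Set.Ici 0) → y 0 = 0 →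
      (∀ t : ℝ, 0 ≤ t →
        (1 / (1 - α)) *
          (∫ τ in (0 : ℝ)..t, derivWithin y (Set.Ici 0) τ * Real.exp ((α / (α - 1)) * (t - τ)))
        = lam * y t) →
      ∀ t : ℝ, 0 ≤ t → y t = 0)
    ∧
    (∀ u x₁ x₂ : ℝ → ℝ,
      ContDiffOn ℝ 1 x₁ (Set.Ici 0) → ContDiffOn ℝ 1 x₂ (Set.Ici 0) →
      x₁ 0 = x₂ 0 →
      (∀ t : ℝ, 0 ≤ t →
        (1 / (1 - α)) *
          (∫ τ in (0 : ℝ)..t, derivWithin x₁ (Set.Ici 0) τ * Real.exp ((α / (α - 1)) * (t - τ)))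
        = lam * x₁ t + u t) →
      (∀ t : ℝ, 0 ≤ t →
        (1 / (1 - α)) *
          (∫ τ in (0 : ℝ)..t, derivWithin x₂ (Set.Ici 0) τ * Real.exp ((α / (α - 1)) * (t - τ)))
        = lam * x₂ t + u t) →
      ∀ t : ℝ, 0 ≤ t → x₁ t = x₂ t) := by
  have hA := antilipschitzWith_one_sub_smul_smul_one (E := ℝ) hK
  simp only [← caputoFabrizioDeriv_eq_mul_integral]
  exact ⟨fun y hy h0 h t ht => eqOn_zero_of_caputoFabrizioDeriv_eq hα.2.ne hA hy h0 h ht,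
    fun u x₁ x₂ h₁ h₂ h0 e₁ e₂ t ht => cf_linear_uniqueness_general hα.2.ne hA h₁ h₂ h0 e₁ e₂ ht⟩
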